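/- Let j be a Scott continuous nucleus and K : I → (L → L) a family of Scott continuous nuclei on a frame L. Writing ⋁ᴺ K for the join of a family of Scott continuous nuclei given by (⋁ᴺ K) U = ⨆ (s : List I), o_K s U, where o_K [] = id and o_K (i :: s) = o_K s ∘ K i, the binary meet distributes over this join: for every U : L, j U ⊓ (⋁ᴺ K) U = (⋁ᴺ (fun i => fun V => j V ⊓ K i V)) U. -/

import Mathlib

/-!
The identity already holds word by word: `j U ⊓ o_K s U = o_M s U` for every list `s`, where
`M i V = j V ⊓ K i V` (`inf_iterComp`). The theorem follows since binary meets distribute over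
suprema in a frame. The word-by-word identity is an induction on `s`: expanding
`o_M s (j U ⊓ K i U)` by the induction hypothesis, and using that `j` and `o_K s` preserve binary
meets, gives `j U ⊓ j (K i U) ⊓ o_K s (j U) ⊓ o_K s (K i U)`, whose two middle factors lie
above `j U` and can be dropped.
-/

universe u v w

def WayBelow {L : Type*} [Order.Frame L] (U V : L) : Prop :=
  ∀ D : Set L, D.Nonempty → DirectedOn (· ≤ ·) D → V ≤ sSup D → ∃ d ∈ D, U ≤ d

def WellInside {L : Type*} [Order.Frame L] (U V : L) : Prop :=
  ∃ W : L, U ⊓ W = ⊥ ∧ V ⊔ W = ⊤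

def IsBasis {I L : Type*} [Order.Frame L] (B : I → L) : Prop :=
  ∀ U : L, ∃ J : Set I, U = ⨆ j ∈ J, B j

def IsNucleus {L : Type*} [Order.Frame L] (j : L → L) : Prop :=
  (∀ U, U ≤ j U) ∧ (∀ U, j (j U) = j U) ∧ (∀ U V, j (U ⊓ V) = j U ⊓ j V)

def IsSpectral (L : Type u) [Order.Frame L] : Prop :=
  ∃ (I : Type u) (B : I → L),
    IsBasis B ∧ (∀ i, WayBelow (B i) (B i)) ∧
    ((∃ t, B t = ⊤) ∧ ∀ i j, ∃ k, B k = B i ⊓ B j) ∧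
    ((∃ b, B b = ⊥) ∧ ∀ i j, ∃ k, B k = B i ⊔ B j)

def iterComp {I L : Type*} (K : I → L → L) : List I → L → L
  | [] => id
  | i :: s => iterComp K s ∘ K i

theorem le_iterComp {I L : Type*} [Order.Frame L] {K : I → L → L}
    (hK : ∀ i, IsNucleus (K i)) (s : List I) (U : L) : U ≤ iterComp K s U := by
  induction s generalizing U with
  | nil => exact le_rfl
  | cons i s ih => exact ((hK i).1 U).trans (ih (K i U))

theorem iterComp_inf {I L : Type*} [Order.Frame L] {K : I → L → L}
    (hK : ∀ i, IsNucleus (K i)) (s : List I) (U V : L) :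
    iterComp K s (U ⊓ V) = iterComp K s U ⊓ iterComp K s V := by
  induction s generalizing U V with
  | nil => rfl
  | cons i s ih =>
    change iterComp K s (K i (U ⊓ V)) = iterComp K s (K i U) ⊓ iterComp K s (K i V)
    rw [(hK i).2.2, ih]

theorem inf_iterComp {I L : Type*} [Order.Frame L] {j : L → L} (hj : IsNucleus j)
    {K : I → L → L} (hK : ∀ i, IsNucleus (K i)) (s : List I) (U : L) :
    j U ⊓ iterComp K s U = iterComp (fun i V => j V ⊓ K i V) s U := by
  induction s generalizing U with
  | nil => exact inf_eq_right.2 (hj.1 U)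
  | cons i s ih =>
    change j U ⊓ iterComp K s (K i U) = iterComp (fun i V => j V ⊓ K i V) s (j U ⊓ K i U)
    have hmono : j U ≤ j (K i U) := by
      rw [← inf_eq_left, ← hj.2.2, inf_eq_left.2 ((hK i).1 U)]
    rw [← ih, hj.2.2, hj.2.1, iterComp_inf hK, inf_eq_left.2 hmono, ← inf_assoc,
      inf_eq_left.2 (le_iterComp hK s (j U))]

theorem meet_distrib_join_nuclei {I : Type*} {L : Type*} [Order.Frame L]
    (j : L → L) (hj : IsNucleus j) (hjs : ScottContinuous j)
    (K : I → L → L)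
    (hK : ∀ i, IsNucleus (K i)) (hKs : ∀ i, ScottContinuous (K i))
    (U : L) :
    j U ⊓ (⨆ s : List I, iterComp K s U)
      = ⨆ s : List I, iterComp (fun i V => j V ⊓ K i V) s U := by
  rw [inf_iSup_eq]
  exact iSup_congr fun s => inf_iterComp hj hK s U
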